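/- arXiv:2207.01236 — 2 statements merged into one kernel-verified Lean document; each statement's English description precedes it below -/
import Mathlib

section
/- Let ℓ ≥ 2, τ > 0, and let s be a nonempty proper subset of {1, …, ℓ} with cardinality k. Define F = conv({τ·e^{(i)} : i ∈ s}) and G = conv({−τ·e^{(i)} : i ∈ s} ∪ {τ·e^{(j)}, −τ·e^{(j)} : j ∉ s}). Then for every u ∈ F and v ∈ G, the Euclidean distance satisfies ‖u − v‖_2 ≥ τ/√k; in particular, ‖u − v‖_2 ≥ τ/√(ℓ − 1). -/
theorem dist_face_complement_ge
    (ℓ : ℕ) (hℓ : 2 ≤ ℓ) (τ : ℝ) (hτ : 0 < τ)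
    (s : Finset (Fin ℓ)) (hs : s.Nonempty) (hs' : s ≠ Finset.univ)
    (k : ℕ) (hk : s.card = k)
    (F G : Set (EuclideanSpace ℝ (Fin ℓ)))
    (hF : F = convexHull ℝ ((fun i => EuclideanSpace.single i τ) '' ↑s))
    (hG : G = convexHull ℝ
      (((fun i => EuclideanSpace.single i (-τ)) '' ↑s) ∪
       ((fun j => EuclideanSpace.single j τ) '' ↑sᶜ) ∪
       ((fun j => EuclideanSpace.single j (-τ)) '' ↑sᶜ))) :
    ∀ u ∈ F, ∀ v ∈ G,
      τ / Real.sqrt k ≤ ‖u - v‖ ∧ τ / Real.sqrt ((ℓ : ℝ) - 1) ≤ ‖u - v‖ := by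
  have hlin : IsLinearMap ℝ (fun x : EuclideanSpace ℝ (Fin ℓ) => ∑ i ∈ s, x i) := by
    constructor
    · intro x y
      simp [Finset.sum_add_distrib]
    · intro c x
      simp [Finset.mul_sum]
  have hsub1 : F ⊆ {x | τ ≤ ∑ i ∈ s, x i} := by
    rw [hF]
    apply convexHull_min _ (convex_halfSpace_ge hlin τ)
    rintro _ ⟨i, hi, rfl⟩
    have hi' : i ∈ s := by simpa using hi
    simp [Pi.single_apply, hi']
  have hsub2 : G ⊆ {x | ∑ i ∈ s, x i ≤ 0} := by
    rw [hG]
    apply convexHull_min _ (convex_halfSpace_le hlin 0)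
    rintro _ ((⟨i, hi, rfl⟩ | ⟨i, hi, rfl⟩) | ⟨i, hi, rfl⟩)
    · have hi' : i ∈ s := by simpa using hi
      simp [Pi.single_apply, hi', hτ.le]
    · have hi' : i ∉ s := by simpa using hi
      simp [Pi.single_apply, hi']
    · have hi' : i ∉ s := by simpa using hi
      simp [Pi.single_apply, hi']
  intro u hu v hv
  have h1 : τ ≤ ∑ i ∈ s, u i := hsub1 hu
  have h2 : ∑ i ∈ s, v i ≤ 0 := hsub2 hv
  have hk0 : 0 < k := hk ▸ hs.card_pos
  have hkl : k + 1 ≤ ℓ := by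
    have := Finset.card_lt_univ_of_notMem (s := s)
      (Classical.choose_spec (by simpa [Finset.eq_univ_iff_forall] using hs' : ∃ x, x ∉ s))
    simp at this
    omega
  have hkR : (0 : ℝ) < k := by exact_mod_cast hk0
  have hklR : (k : ℝ) ≤ (ℓ : ℝ) - 1 := by
    have : ((k + 1 : ℕ) : ℝ) ≤ ℓ := by exact_mod_cast hkl
    push_cast at this
    linarith
  have h3 : τ ≤ ∑ i ∈ s, (u - v) i := by
    simp [Finset.sum_sub_distrib]
    linarith
  have h4 : (∑ i ∈ s, (u - v) i) ^ 2 ≤ k * ∑ i ∈ s, ((u - v) i) ^ 2 := by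
    have := sq_sum_le_card_mul_sum_sq (s := s) (f := fun i => (u - v) i)
    rwa [hk] at this
  have h5 : ∑ i ∈ s, ((u - v) i) ^ 2 ≤ ‖u - v‖ ^ 2 := by
    rw [EuclideanSpace.real_norm_sq_eq]
    exact Finset.sum_le_sum_of_subset_of_nonneg (Finset.subset_univ s) (fun i _ _ => sq_nonneg _)
  have h6 : τ / Real.sqrt k ≤ ‖u - v‖ := by
    rw [div_le_iff₀ (Real.sqrt_pos.2 hkR)]
    refine (abs_le_of_sq_le_sq' ?_ (by positivity)).2
    rw [mul_pow, Real.sq_sqrt hkR.le]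
    have : τ ^ 2 ≤ (∑ i ∈ s, (u - v) i) ^ 2 := pow_le_pow_left₀ hτ.le h3 2
    nlinarith
  refine ⟨h6, le_trans ?_ h6⟩
  have := Real.sqrt_pos.2 hkR
  gcongr
end

section
/- Let A ∈ ℝ^{m×ℓ} with B = AᵀA invertible, and let b ∈ ℝ^m with β := ‖b‖_2^2 > 0. Set w = Aᵀb and p = B^{−1}w, and suppose q := wᵀp ≠ β. Define ñ₂ = −(1/β)·(B^{−1} + p·pᵀ/(β − q))·w ∈ ℝ^ℓ, ñ₃ = (1 − wᵀñ₂)/β ∈ ℝ, and Ñ₁ = B^{−1} − p·ñ₂ᵀ ∈ ℝ^{ℓ×ℓ}. Then the (ℓ+1) × (ℓ+1) block matrix M with blocks [[B, w], [wᵀ, β]] is invertible, and its inverse is the block matrix [[Ñ₁, ñ₂], [ñ₂ᵀ, ñ₃]]; i.e., [[B, w], [wᵀ, β]] · [[Ñ₁, ñ₂], [ñ₂ᵀ, ñ₃]] = I_{ℓ+1}. -/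
open Matrix

theorem block_gram_inverse_update
    (m ℓ : ℕ) (A : Matrix (Fin m) (Fin ℓ) ℝ) (b : Fin m → ℝ)
    (B : Matrix (Fin ℓ) (Fin ℓ) ℝ) (hB : B = Aᵀ * A) (hBinv : IsUnit B)
    (β : ℝ) (hβ : β = ∑ i, (b i) ^ 2) (hβpos : 0 < β)
    (w : Fin ℓ → ℝ) (hw : w = Aᵀ *ᵥ b)
    (p : Fin ℓ → ℝ) (hp : p = B⁻¹ *ᵥ w)
    (q : ℝ) (hq : q = w ⬝ᵥ p) (hne : q ≠ β)
    (n₂ : Fin ℓ → ℝ)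
    (hn₂ : n₂ = -(1 / β) • ((B⁻¹ + (1 / (β - q)) • vecMulVec p p) *ᵥ w))
    (n₃ : ℝ) (hn₃ : n₃ = (1 - w ⬝ᵥ n₂) / β)
    (N₁ : Matrix (Fin ℓ) (Fin ℓ) ℝ) (hN₁ : N₁ = B⁻¹ - vecMulVec p n₂)
    (M : Matrix (Fin ℓ ⊕ Unit) (Fin ℓ ⊕ Unit) ℝ)
    (hM : M = fromBlocks B (Matrix.of fun i (_ : Unit) => w i)
      (Matrix.of fun (_ : Unit) j => w j) (Matrix.of fun (_ : Unit) (_ : Unit) => β)) :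
    IsUnit M ∧
    M * fromBlocks N₁ (Matrix.of fun i (_ : Unit) => n₂ i)
      (Matrix.of fun (_ : Unit) j => n₂ j)
      (Matrix.of fun (_ : Unit) (_ : Unit) => n₃) = 1 := by
  have hd : β - q ≠ 0 := sub_ne_zero.mpr (Ne.symm hne)
  have hβ0 : β ≠ 0 := hβpos.ne'
  have hdet : IsUnit B.det := (Matrix.isUnit_iff_isUnit_det B).mp hBinv
  have hBB : B * B⁻¹ = 1 := Matrix.mul_nonsing_inv B hdet
  have hBp : B *ᵥ p = w := by rw [hp, mulVec_mulVec, hBB, one_mulVec]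
  have hsym : Bᵀ = B := by rw [hB]; simp
  have hwB : w ᵥ* B⁻¹ = p := by
    rw [hp, ← vecMul_transpose, transpose_nonsing_inv, hsym]
  have hpw : p ⬝ᵥ w = q := by rw [hq, dotProduct_comm]
  have h2 : n₂ = (-(1 / (β - q))) • p := by
    rw [hn₂, add_mulVec, ← hp, smul_mulVec, vecMulVec_mulVec, hpw]
    ext i
    simp only [Pi.smul_apply, Pi.add_apply, smul_eq_mul, MulOpposite.smul_eq_mul_unop,
      MulOpposite.unop_op]
    field_simp
    ring
  have hw2 : w ⬝ᵥ n₂ = -(q / (β - q)) := by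
    rw [h2, dotProduct_smul, ← hq, smul_eq_mul]
    ring
  have h3 : n₃ = 1 / (β - q) := by
    rw [hn₃, hw2]
    field_simp
    ring
  have hB2 : B *ᵥ n₂ = (-(1 / (β - q))) • w := by rw [h2, mulVec_smul, hBp]
  have h11 : B * N₁ = 1 - vecMulVec w n₂ := by
    rw [hN₁, Matrix.mul_sub, hBB, mul_vecMulVec, hBp]
  have h21 : w ᵥ* N₁ = p - q • n₂ := by
    rw [hN₁, vecMul_sub, hwB, vecMul_vecMulVec, ← hq]
  have key : M * fromBlocks N₁ (Matrix.of fun i (_ : Unit) => n₂ i)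
      (Matrix.of fun (_ : Unit) j => n₂ j)
      (Matrix.of fun (_ : Unit) (_ : Unit) => n₃) = 1 := by
    rw [hM, fromBlocks_multiply, ← fromBlocks_one, h11]
    congr 1
    · ext i j
      simp [Matrix.mul_apply, vecMulVec_apply]
    · ext i j
      have := congrFun hB2 i
      simp only [mulVec, dotProduct, Pi.smul_apply, smul_eq_mul] at this
      simp [Matrix.mul_apply, this, h3]
      ring
    · ext i j
      have := congrFun h21 j
      simp only [vecMul, dotProduct, Pi.smul_apply, Pi.sub_apply, smul_eq_mul] at this
      simp [Matrix.mul_apply, this, h2]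
      field_simp
      ring
    · ext i j
      have := hw2
      simp only [dotProduct] at this
      simp [Matrix.mul_apply, this, h3]
      field_simp
      ring
  exact ⟨IsUnit.of_mul_eq_one _ key, key⟩
end
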